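/- Let σ and τ be separable permutations with |τ| − |σ| ≥ 3. Suppose τ has a contiguous subword of contiguous letters that, after flattening, equals π ⊕ π with π indecomposable (or π ⊖ π with π skew indecomposable), and σ is obtained from τ by removing one of these copies of π (and flattening). Then the open interval (σ,τ) in the pattern poset is disconnected. -/

import Mathlib

open scoped Classical

/-- The set of all (finite) permutations, as patterns: a permutation of length `n`
together with its length. -/
abbrev PermPt := Σ n : ℕ, Equiv.Perm (Fin n)

/-- Pattern containment order: `σ` occurs in `τ` if there is a strictly monotone
choice of positions on which `τ` is order-isomorphic to `σ`. -/
def ple (σ τ : PermPt) : Prop :=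
  ∃ f : Fin σ.1 → Fin τ.1, StrictMono f ∧
    ∀ a b : Fin σ.1, σ.2 a ≤ σ.2 b ↔ τ.2 (f a) ≤ τ.2 (f b)

/-- Strict pattern containment. -/
def plt (σ τ : PermPt) : Prop := ple σ τ ∧ ¬ ple τ σ

/-- Direct sum of permutations. -/
def pds {m n : ℕ} (α : Equiv.Perm (Fin m)) (β : Equiv.Perm (Fin n)) :
    Equiv.Perm (Fin (m + n)) :=
  finSumFinEquiv.symm.trans ((Equiv.sumCongr α β).trans finSumFinEquiv)

/-- Skew sum of permutations. -/
def pss {m n : ℕ} (α : Equiv.Perm (Fin m)) (β : Equiv.Perm (Fin n)) :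
    Equiv.Perm (Fin (m + n)) :=
  finSumFinEquiv.symm.trans
    (((Equiv.sumCongr α β).trans (Equiv.sumComm (Fin m) (Fin n))).trans
      (finSumFinEquiv.trans (finCongr (Nat.add_comm n m))))

/-- Direct sum, as an operation on `PermPt`. -/
def pdsP (a b : PermPt) : PermPt := ⟨a.1 + b.1, pds a.2 b.2⟩

/-- Skew sum, as an operation on `PermPt`. -/
def pssP (a b : PermPt) : PermPt := ⟨a.1 + b.1, pss a.2 b.2⟩

/-- The empty permutation. -/
def pempty : PermPt := ⟨0, 1⟩

/-- The permutation `1` of length one. -/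
def pone : PermPt := ⟨1, 1⟩

/-- A permutation is decomposable if it is the direct sum of two nonempty
permutations, i.e. some proper nonempty initial segment of positions is mapped
to the corresponding initial segment of values. -/
def Decomp {n : ℕ} (σ : Equiv.Perm (Fin n)) : Prop :=
  ∃ m : ℕ, 0 < m ∧ m < n ∧ ∀ i : Fin n, (i : ℕ) < m → (σ i : ℕ) < m

/-- Disconnectedness of a set of permutations under pattern containment:
it splits into two nonempty parts with no comparabilities between them. -/
def Disconn (S : Set PermPt) : Prop :=
  ∃ A B : Set PermPt, A ∪ B = S ∧ A.Nonempty ∧ B.Nonempty ∧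
    ∀ x ∈ A, ∀ y ∈ B, ¬ ple x y ∧ ¬ ple y x

/-- A permutation is skew decomposable if it is the skew sum of two nonempty
permutations. -/
def SkewDecomp {n : ℕ} (σ : Equiv.Perm (Fin n)) : Prop :=
  ∃ m : ℕ, 0 < m ∧ m < n ∧ ∀ i : Fin n, (i : ℕ) < m → n - m ≤ (σ i : ℕ)

/-- Separable permutations: built from the singleton permutation by direct
sums and skew sums (equivalently, avoiding 2413 and 3142). -/
inductive Separable : PermPt → Prop
  | one : Separable pone
  | ds (a b : PermPt) : Separable a → Separable b → Separable (pdsP a b)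
  | ss (a b : PermPt) : Separable a → Separable b → Separable (pssP a b)

/-!
Both sums make the pattern poset, graded by length, into an ordered monoid in which every pattern
below `a ⊕ b` is a sum of a pattern below `a` and one below `b`. Hence for indecomposable `π` the
members of `(π, π ⊕ π)` are the `π ⊕ ρ` and the `ρ ⊕ π` with `ρ` nonempty and strictly below `π`,
and no member of the first kind is comparable to one of the second. Moreover a splitting of an
interval `(s, t)` with `|t| - |s| ≥ 3` extends to `(a ⊕ s, a ⊕ t)`: this may be checked for
indecomposable `a`, where a pattern `x` inherits the side of the least `d` with `x ≤ a ⊕ d`.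

Let `τ = A ⊕ B` be separable with a doubled block. The block lies in `A`, or in `B`, where induction
applies, or it straddles the two summands. In the last case it decomposes with respect to `⊕`, so it
is `π ⊕ π` and is cut between the two copies: `τ = A' ⊕ π ⊕ π ⊕ B'` and `σ = A' ⊕ π ⊕ B'`. If
`τ = A ⊖ B`, reverse the order of the values.
-/

/-! ### Disconnected intervals in graded posets -/

section Order

variable {P : Type*} [PartialOrder P]

/-- `A` cuts the comparability graph of `s` along a union of connected components. -/
def IsComponentUnion (A s : Set P) : Prop :=
  ∀ x ∈ s, ∀ y ∈ s, x ≤ y → (x ∈ A ↔ y ∈ A)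

/-- The comparability graph of `s` has more than one component. A single side `A` of the splitting
is recorded, the other one being `s \ A`. -/
def ComparabilityDisconnected (s : Set P) : Prop :=
  ∃ A, IsComponentUnion A s ∧ (s ∩ A).Nonempty ∧ (s \ A).Nonempty

theorem ComparabilityDisconnected.image {Q : Type*} [PartialOrder Q] {s : Set P}
    (h : ComparabilityDisconnected s) (e : P ≃o Q) : ComparabilityDisconnected (e '' s) := by
  obtain ⟨A, hA, ⟨p, hp, hpA⟩, q, hq, hqA⟩ := h
  refine ⟨e '' A, ?_, ⟨e p, ⟨p, hp, rfl⟩, p, hpA, rfl⟩, e q, ⟨q, hq, rfl⟩, ?_⟩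
  · rintro _ ⟨x, hx, rfl⟩ _ ⟨y, hy, rfl⟩ hxy
    simpa only [e.injective.mem_set_image] using hA x hx y hy (e.le_iff_le.1 hxy)
  · rwa [e.injective.mem_set_image]

variable [GradeOrder ℕ P] {a b : P}

theorem lt_of_le_of_grade_lt (h : a ≤ b) (hg : grade ℕ a < grade ℕ b) : a < b :=
  h.lt_of_ne (by rintro rfl; exact hg.false)

theorem eq_of_le_of_grade_le (h : a ≤ b) (hg : grade ℕ b ≤ grade ℕ a) : a = b :=
  h.eq_of_not_lt fun hlt => (grade_strictMono hlt).not_ge hg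

theorem grade_pos_of_ne_bot [OrderBot P] (ha : a ≠ ⊥) : 0 < grade ℕ a :=
  (Nat.zero_le _).trans_lt (grade_strictMono (bot_lt_iff_ne_bot.2 ha))

theorem exists_lt_lt_of_grade_add_two_le (h : a ≤ b) (hg : grade ℕ a + 2 ≤ grade ℕ b) :
    ∃ c, a < c ∧ c < b := by
  refine (lt_of_le_of_grade_lt h (by omega)).exists_lt_lt fun hcov => ?_
  have := Nat.covBy_iff_add_one_eq.1 (hcov.grade ℕ)
  omega

end Order

/-! ### Sum operations -/

/-- The common properties of the direct sum and the skew sum of permutations, for an operation on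
a poset graded by length: it is an order-preserving monoid structure with unit `⊥` that satisfies
a decomposition property (`exists_eq_of_le`) and Levi's lemma (`exists_eq_of_op_eq`). -/
structure IsSum {P : Type*} [PartialOrder P] [OrderBot P] [GradeOrder ℕ P] (op : P → P → P) :
    Prop where
  grade_op (a b : P) : grade ℕ (op a b) = grade ℕ a + grade ℕ b
  mono {a a' b b' : P} : a ≤ a' → b ≤ b' → op a b ≤ op a' b'
  assoc (a b c : P) : op (op a b) c = op a (op b c)
  bot_op (a : P) : op ⊥ a = a
  op_bot (a : P) : op a ⊥ = a
  exists_eq_of_le {x a b : P} : x ≤ op a b → ∃ x₁ ≤ a, ∃ x₂ ≤ b, x = op x₁ x₂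
  exists_eq_of_op_eq {a b c d : P} : op a b = op c d → grade ℕ a ≤ grade ℕ c →
    ∃ z, c = op a z ∧ b = op z d

/-- Indecomposability with respect to a sum operation; `⊥` is not indecomposable. -/
def Indecomposable {P : Type*} [Bot P] (op : P → P → P) (p : P) : Prop :=
  p ≠ ⊥ ∧ ∀ a b, p = op a b → a = ⊥ ∨ b = ⊥

theorem Indecomposable.flip {P : Type*} [Bot P] {op : P → P → P} {p : P}
    (hp : Indecomposable op p) : Indecomposable (fun a b => op b a) p :=
  ⟨hp.1, fun a b h => (hp.2 b a h).symm⟩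

theorem Indecomposable.of_orderIso {P Q : Type*} [PartialOrder P] [OrderBot P] [PartialOrder Q]
    [OrderBot Q] {op : P → P → P} {op' : Q → Q → Q} {p : P} (hp : Indecomposable op p) (e : P ≃o Q)
    (hop : ∀ a b, e (op a b) = op' (e a) (e b)) : Indecomposable op' (e p) := by
  refine ⟨fun h => hp.1 ((map_eq_bot_iff e).1 h), fun a b h => ?_⟩
  obtain ⟨a, rfl⟩ := e.surjective a
  obtain ⟨b, rfl⟩ := e.surjective b
  rw [← hop, e.apply_eq_iff_eq] at h
  simpa only [map_eq_bot_iff] using hp.2 a b h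

namespace IsSum

variable {P : Type*} [PartialOrder P] [OrderBot P] [GradeOrder ℕ P] {op : P → P → P}

theorem flip (G : IsSum op) : IsSum fun a b => op b a where
  grade_op a b := (G.grade_op b a).trans (add_comm _ _)
  mono ha hb := G.mono hb ha
  assoc a b c := (G.assoc c b a).symm
  bot_op := G.op_bot
  op_bot := G.bot_op
  exists_eq_of_le h := by
    obtain ⟨x₁, h₁, x₂, h₂, rfl⟩ := G.exists_eq_of_le h
    exact ⟨x₂, h₂, x₁, h₁, rfl⟩
  exists_eq_of_op_eq {a b c d} h hg := by
    have hsum := congrArg (grade ℕ) h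
    simp only [G.grade_op] at hsum
    obtain ⟨z, hb, hc⟩ := G.exists_eq_of_op_eq h.symm (by omega)
    exact ⟨z, hc, hb⟩

theorem of_orderIso (G : IsSum op) {Q : Type*} [PartialOrder Q] [OrderBot Q] [GradeOrder ℕ Q]
    {op' : Q → Q → Q} (e : P ≃o Q) (he : ∀ a, grade ℕ (e a) = grade ℕ a)
    (hop : ∀ a b, e (op a b) = op' (e a) (e b)) : IsSum op' := by
  obtain rfl : op' = fun a b => e (op (e.symm a) (e.symm b)) := by
    ext a b
    rw [hop, e.apply_symm_apply, e.apply_symm_apply]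
  have he' (a : Q) : grade ℕ (e.symm a) = grade ℕ a := by rw [← he, e.apply_symm_apply]
  exact
    { grade_op a b := by rw [he, G.grade_op, he', he']
      mono ha hb := e.monotone (G.mono (e.symm.monotone ha) (e.symm.monotone hb))
      assoc a b c := by simp only [e.symm_apply_apply, G.assoc]
      bot_op a := by rw [e.symm.map_bot, G.bot_op, e.apply_symm_apply]
      op_bot a := by rw [e.symm.map_bot, G.op_bot, e.apply_symm_apply]
      exists_eq_of_le {x a b} h := by
        obtain ⟨x₁, h₁, x₂, h₂, hx⟩ := G.exists_eq_of_le (e.symm_apply_le.2 h)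
        refine ⟨e x₁, e.le_symm_apply.1 h₁, e x₂, e.le_symm_apply.1 h₂, ?_⟩
        rw [e.symm_apply_apply, e.symm_apply_apply, ← hx, e.apply_symm_apply]
      exists_eq_of_op_eq {a b c d} h hg := by
        rw [← he' a, ← he' c] at hg
        obtain ⟨z, hc, hb⟩ := G.exists_eq_of_op_eq (e.injective h) hg
        refine ⟨e z, ?_, ?_⟩
        · rw [e.symm_apply_apply, ← hc, e.apply_symm_apply]
        · rw [e.symm_apply_apply, ← hb, e.apply_symm_apply] }

variable (G : IsSum op)
include G

theorem grade_bot : grade ℕ (⊥ : P) = 0 := by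
  have h := G.grade_op ⊥ ⊥
  rw [G.bot_op] at h
  omega

theorem le_op_right (a b : P) : b ≤ op a b := by
  simpa only [G.bot_op] using G.mono (bot_le : ⊥ ≤ a) (le_refl b)

theorem lt_op_right {a : P} (ha : a ≠ ⊥) (b : P) : b < op a b :=
  lt_of_le_of_grade_lt (G.le_op_right a b) (by
    rw [G.grade_op]
    exact Nat.lt_add_of_pos_left (grade_pos_of_ne_bot ha))

theorem op_lt_op_left {b c : P} (a : P) (h : b < c) : op a b < op a c :=
  lt_of_le_of_grade_lt (G.mono le_rfl h.le) (by
    simpa only [G.grade_op, add_lt_add_iff_left] using grade_strictMono h)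

theorem op_lt_op_right {a b : P} (h : a < b) (c : P) : op a c < op b c :=
  G.flip.op_lt_op_left c h

theorem le_of_op_le_op_left {a b c : P} (h : op a b ≤ op a c) : b ≤ c := by
  obtain ⟨u, hu, v, hv, huv⟩ := G.exists_eq_of_le h
  obtain ⟨z, -, rfl⟩ := G.exists_eq_of_op_eq huv.symm (grade_mono hu)
  exact (G.le_op_right z b).trans hv

theorem op_le_of_op_le_op {a b u c : P} (ha : Indecomposable op a)
    (hu : u < a) (h : op a b ≤ op u c) : op a b ≤ c := by
  obtain ⟨x, hx, y, hy, hxy⟩ := G.exists_eq_of_le h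
  have hxa : grade ℕ x < grade ℕ a := (grade_mono hx).trans_lt (grade_strictMono hu)
  obtain ⟨z, hz, -⟩ := G.exists_eq_of_op_eq hxy.symm hxa.le
  obtain rfl | rfl := ha.2 x z hz
  · rwa [hxy, G.bot_op]
  · rw [hz, G.op_bot] at hxa
    exact absurd hxa (lt_irrefl _)

theorem exists_galoisConnection (a : P) :
    ∃ D : P → P, GaloisConnection D (op a) ∧ ∀ x, ∃ u ≤ a, x = op u (D x) := by
  have hmin (x : P) : ∃ d, (∃ u ≤ a, x = op u d) ∧
      ∀ d', (∃ u ≤ a, x = op u d') → grade ℕ d ≤ grade ℕ d' := by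
    obtain ⟨d, hd, hmin⟩ := (measure (grade ℕ)).wf.has_min {d | ∃ u ≤ a, x = op u d}
      ⟨x, ⊥, bot_le, (G.bot_op x).symm⟩
    exact ⟨d, hd, fun d' hd' => not_lt.1 (hmin d' hd')⟩
  choose D hD hDmin using hmin
  refine ⟨D, fun x y => ⟨fun h => ?_, fun h => ?_⟩, hD⟩
  · obtain ⟨u, hu, hx⟩ := hD x
    exact hx.le.trans (G.mono hu h)
  · obtain ⟨u, -, hx⟩ := hD x
    obtain ⟨u', hu', v, hv, hx'⟩ := G.exists_eq_of_le h
    have hgrade := hDmin x v ⟨u', hu', hx'⟩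
    have heq : op u' v = op u (D x) := hx'.symm.trans hx
    have hsum := congrArg (grade ℕ) heq
    simp only [G.grade_op] at hsum
    obtain ⟨z, -, rfl⟩ := G.exists_eq_of_op_eq heq (by omega)
    exact (G.le_op_right z (D x)).trans hv

theorem mem_iff_op_mem_of_op_le {a s t z : P} {A : Set P} (ha : a ≠ ⊥)
    (hA : IsComponentUnion A (Set.Ioo s t)) (hst : grade ℕ s + 3 ≤ grade ℕ t)
    (hz : z ∈ Set.Ioo s t) (hazt : op a z ≤ t) : z ∈ A ↔ op a s ∈ A := by
  obtain ⟨hsz, hzt⟩ := hz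
  have has : op a s ∈ Set.Ioo s t := ⟨G.lt_op_right ha s, (G.op_lt_op_left a hsz).trans_le hazt⟩
  obtain hazt' | rfl := hazt.lt_or_eq
  · have haz : op a z ∈ Set.Ioo s t := ⟨hsz.trans (G.lt_op_right ha z), hazt'⟩
    calc z ∈ A ↔ op a z ∈ A := hA _ ⟨hsz, hzt⟩ _ haz (G.le_op_right a z)
      _ ↔ op a s ∈ A := (hA _ has _ haz (G.mono le_rfl hsz.le)).symm
  have hpos := grade_pos_of_ne_bot ha
  by_cases ha2 : 2 ≤ grade ℕ a
  · obtain ⟨b, hb, hba⟩ := exists_lt_lt_of_grade_add_two_le (bot_le : ⊥ ≤ a)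
      (by rw [G.grade_bot]; omega)
    have hbz : op b z ∈ Set.Ioo s (op a z) :=
      ⟨hsz.trans (G.lt_op_right hb.ne' z), G.op_lt_op_right hba z⟩
    have hbs : op b s ∈ Set.Ioo s (op a z) :=
      ⟨G.lt_op_right hb.ne' s, (G.op_lt_op_right hba s).trans has.2⟩
    calc z ∈ A ↔ op b z ∈ A := hA _ ⟨hsz, hzt⟩ _ hbz (G.le_op_right b z)
      _ ↔ op b s ∈ A := (hA _ hbs _ hbz (G.mono le_rfl hsz.le)).symm
      _ ↔ op a s ∈ A := hA _ hbs _ has (G.mono hba.le le_rfl)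
  · obtain ⟨w, hsw, hwz⟩ := exists_lt_lt_of_grade_add_two_le hsz.le
      (by rw [G.grade_op] at hst; omega)
    have hw : w ∈ Set.Ioo s (op a z) := ⟨hsw, hwz.trans hzt⟩
    have haw : op a w ∈ Set.Ioo s (op a z) :=
      ⟨hsw.trans (G.lt_op_right ha w), G.op_lt_op_left a hwz⟩
    calc z ∈ A ↔ w ∈ A := (hA _ hw _ ⟨hsz, hzt⟩ hwz.le).symm
      _ ↔ op a w ∈ A := hA _ hw _ haw (G.le_op_right a w)
      _ ↔ op a s ∈ A := (hA _ has _ haw (G.mono le_rfl hsw.le)).symm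

theorem mem_iff_op_mem_of_op_le_op {a s t u w z : P} {A : Set P} (ha : Indecomposable op a)
    (hA : IsComponentUnion A (Set.Ioo s t)) (hst : grade ℕ s + 3 ≤ grade ℕ t)
    (hz : z ∈ Set.Ioo s t) (hu : u < a) (hw : w ≤ a) (hs : op a s ≤ op w z)
    (hle : op w z ≤ op u t) : z ∈ A ↔ op a s ∈ A := by
  obtain hwa | rfl := hw.lt_or_eq
  · have hasz : op a s ≤ z := G.op_le_of_op_le_op ha hwa hs
    exact (hA _ ⟨G.lt_op_right ha.1 s, hasz.trans_lt hz.2⟩ _ hz hasz).symm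
  · exact G.mem_iff_op_mem_of_op_le ha.1 hA hst hz (G.op_le_of_op_le_op ha hu hle)

/- An element `x` of the new interval is coloured like its residual `D x`, which lies in the old
interval except when `D x = t`; all elements `x` of this last kind are coloured like `op a s`. -/
theorem comparabilityDisconnected_op_of_indecomposable {a s t : P} (ha : Indecomposable op a)
    (hst : grade ℕ s + 3 ≤ grade ℕ t) (h : ComparabilityDisconnected (Set.Ioo s t)) :
    ComparabilityDisconnected (Set.Ioo (op a s) (op a t)) := by
  obtain ⟨A, hA, ⟨p, hp, hpA⟩, q, hq, hqA⟩ := h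
  obtain ⟨D, hgc, hD⟩ := G.exists_galoisConnection a
  have hD_op (x : P) : D (op a x) = x :=
    (hgc.l_u_le x).antisymm (G.le_of_op_le_op_left (hgc.le_u_l (op a x)))
  have hD_le {x : P} (hx : x ∈ Set.Ioo (op a s) (op a t)) : D x ≤ t := hgc.l_le hx.2.le
  have hD_mem {x : P} (hx : x ∈ Set.Ioo (op a s) (op a t)) (hxt : D x ≠ t) :
      D x ∈ Set.Ioo s t :=
    ⟨(G.le_of_op_le_op_left (hx.1.le.trans (hgc.le_u_l x))).lt_of_not_ge fun hle =>
      hx.1.not_ge (hgc.le_u hle), (hD_le hx).lt_of_ne hxt⟩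
  have hmem_of_eq {x y : P} (hx : x ∈ Set.Ioo (op a s) (op a t))
      (hy : y ∈ Set.Ioo (op a s) (op a t)) (hyx : y ≤ x) (hxt : D x = t) (hyt : D y ≠ t) :
      D y ∈ A ↔ op a s ∈ A := by
    obtain ⟨u, hu, hxu⟩ := hD x
    obtain ⟨w, hw, hyw⟩ := hD y
    rw [hxt] at hxu
    exact G.mem_iff_op_mem_of_op_le_op ha hA hst (hD_mem hy hyt)
      (hu.lt_of_ne fun h => hx.2.ne (h ▸ hxu)) hw (hyw ▸ hy.1.le) (hyw ▸ hxu ▸ hyx)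
  refine ⟨{x | (if D x = t then op a s else D x) ∈ A}, fun y hy x hx hyx => ?_,
    ⟨op a p, ⟨G.op_lt_op_left a hp.1, G.op_lt_op_left a hp.2⟩, ?_⟩,
    op a q, ⟨G.op_lt_op_left a hq.1, G.op_lt_op_left a hq.2⟩, ?_⟩
  · by_cases hyt : D y = t
    · have hxt : D x = t := (hD_le hx).antisymm (hyt ▸ hgc.monotone_l hyx)
      simp [hyt, hxt]
    · by_cases hxt : D x = t
      · simpa [hyt, hxt] using hmem_of_eq hx hy hyx hxt hyt
      · simpa [hyt, hxt] using hA _ (hD_mem hy hyt) _ (hD_mem hx hxt) (hgc.monotone_l hyx)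
  · simpa [hD_op, hp.2.ne] using hpA
  · simpa [hD_op, hq.2.ne] using hqA

theorem comparabilityDisconnected_op_left {s t : P} (a : P) (hst : grade ℕ s + 3 ≤ grade ℕ t)
    (h : ComparabilityDisconnected (Set.Ioo s t)) :
    ComparabilityDisconnected (Set.Ioo (op a s) (op a t)) := by
  induction a using (measure (grade ℕ : P → ℕ)).wf.induction generalizing s t with
  | _ a ih =>
  obtain rfl | ha := eq_or_ne a ⊥
  · simpa only [G.bot_op] using h
  by_cases hind : Indecomposable op a
  · exact G.comparabilityDisconnected_op_of_indecomposable hind hst h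
  obtain ⟨x, y, rfl, hx, hy⟩ : ∃ x y, a = op x y ∧ x ≠ ⊥ ∧ y ≠ ⊥ := by
    simpa [Indecomposable, ha] using hind
  have hxpos := grade_pos_of_ne_bot hx
  have hypos := grade_pos_of_ne_bot hy
  have hgrade := G.grade_op x y
  have hy' := ih y (show grade ℕ y < _ by omega) hst h
  rw [G.assoc, G.assoc]
  exact ih x (show grade ℕ x < _ by omega) (by simp only [G.grade_op]; omega) hy'

theorem comparabilityDisconnected_op_right {s t : P} (a : P) (hst : grade ℕ s + 3 ≤ grade ℕ t)
    (h : ComparabilityDisconnected (Set.Ioo s t)) :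
    ComparabilityDisconnected (Set.Ioo (op s a) (op t a)) :=
  G.flip.comparabilityDisconnected_op_left a hst h

theorem exists_eq_op_of_mem_Ioo {p x : P} (hp : Indecomposable op p)
    (hx : x ∈ Set.Ioo p (op p p)) :
    (∃ r ∈ Set.Ioo ⊥ p, x = op p r) ∨ ∃ r ∈ Set.Ioo ⊥ p, x = op r p := by
  obtain ⟨y, hy, z, hz, rfl⟩ := G.exists_eq_of_le hx.2.le
  obtain ⟨u, hu, v, hv, huv⟩ := G.exists_eq_of_le hx.1.le
  obtain rfl | rfl := hp.2 u v huv
  · rw [G.bot_op] at huv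
    obtain rfl := hz.antisymm (huv ▸ hv)
    exact Or.inr ⟨y, ⟨bot_lt_iff_ne_bot.2 fun h => hx.1.ne (h ▸ (G.bot_op z).symm),
      hy.lt_of_ne fun h => hx.2.ne (h ▸ rfl)⟩, rfl⟩
  · rw [G.op_bot] at huv
    obtain rfl := hy.antisymm (huv ▸ hu)
    exact Or.inl ⟨z, ⟨bot_lt_iff_ne_bot.2 fun h => hx.1.ne (h ▸ (G.op_bot y).symm),
      hz.lt_of_ne fun h => hx.2.ne (h ▸ rfl)⟩, rfl⟩

theorem not_op_le_op {p r r' : P} (hp : Indecomposable op p) (hr : ⊥ < r) (hr' : r' < p) :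
    ¬ op p r ≤ op r' p := fun h =>
  (G.flip.lt_op_right hr.ne' p).not_ge (G.op_le_of_op_le_op hp hr' h)

theorem comparabilityDisconnected_Ioo_op_self {p : P} (hp : Indecomposable op p)
    (hp2 : 2 ≤ grade ℕ p) : ComparabilityDisconnected (Set.Ioo p (op p p)) := by
  obtain ⟨b, hb, hbp⟩ := exists_lt_lt_of_grade_add_two_le (bot_le : ⊥ ≤ p)
    (by rw [G.grade_bot]; omega)
  refine ⟨{x | ∃ r ∈ Set.Ioo ⊥ p, x = op p r}, fun x hx y hy hxy => ⟨?_, ?_⟩,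
    ⟨op p b, ⟨G.flip.lt_op_right hb.ne' p, G.op_lt_op_left p hbp⟩, b, ⟨hb, hbp⟩, rfl⟩,
    op b p, ⟨G.lt_op_right hb.ne' p, G.op_lt_op_right hbp p⟩, ?_⟩
  · rintro ⟨r, hr, rfl⟩
    refine (G.exists_eq_op_of_mem_Ioo hp hy).resolve_right ?_
    rintro ⟨r', hr', rfl⟩
    exact G.not_op_le_op hp hr.1 hr'.2 hxy
  · rintro ⟨r, hr, rfl⟩
    refine (G.exists_eq_op_of_mem_Ioo hp hx).resolve_right ?_
    rintro ⟨r', hr', rfl⟩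
    exact G.flip.not_op_le_op hp.flip hr'.1 hr.2 hxy
  · rintro ⟨r, hr, heq⟩
    exact G.not_op_le_op hp hr.1 hbp heq.ge

theorem eq_of_op_self_eq {p x y : P} (hp : Indecomposable op p) (hx : x ≠ ⊥) (hy : y ≠ ⊥)
    (h : op p p = op x y) : p = x ∧ p = y := by
  obtain hle | hle := le_total (grade ℕ p) (grade ℕ x)
  · obtain ⟨z, rfl, hz⟩ := G.exists_eq_of_op_eq h hle
    obtain rfl := (hp.2 z y hz).resolve_right hy
    exact ⟨(G.op_bot p).symm, hz.trans (G.bot_op y)⟩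
  · obtain ⟨z, hz, rfl⟩ := G.exists_eq_of_op_eq h.symm hle
    obtain rfl := (hp.2 x z hz).resolve_left hx
    exact ⟨hz.trans (G.op_bot x), (G.bot_op p).symm⟩

end IsSum

/-! ### The pattern poset -/

namespace PermPt

/-- The one-line notation of `T` with positions and values counted from `0`, extended by the
identity to a permutation of `ℕ`, so that its positions can be shifted freely. -/
noncomputable def entry (T : PermPt) : Equiv.Perm ℕ :=
  T.2.viaEmbedding Fin.valEmbedding

theorem entry_val (T : PermPt) (i : Fin T.1) : entry T i = T.2 i :=
  T.2.viaEmbedding_apply Fin.valEmbedding i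

theorem entry_of_le {T : PermPt} {i : ℕ} (hi : T.1 ≤ i) : entry T i = i :=
  T.2.viaEmbedding_apply_of_notMem Fin.valEmbedding i fun ⟨j, hj⟩ => hi.not_gt (hj ▸ j.isLt)

theorem entry_lt_length {T : PermPt} {i : ℕ} (hi : i < T.1) : entry T i < T.1 := by
  rw [entry_val T ⟨i, hi⟩]
  exact (T.2 _).isLt

theorem exists_entry_eq {T : PermPt} {k : ℕ} (hk : k < T.1) : ∃ i < T.1, entry T i = k := by
  obtain ⟨i, rfl⟩ := (entry T).surjective k
  exact ⟨i, not_le.1 fun hi => (hi.trans (entry_of_le hi).ge).not_gt hk, rfl⟩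

theorem eq_of_entry_lt_entry {S T : PermPt} (hlen : S.1 = T.1)
    (h : ∀ i j, i < S.1 → j < S.1 → entry S i < entry S j → entry T i < entry T j) : S = T := by
  obtain ⟨n, σ⟩ := S
  obtain ⟨_, τ⟩ := T
  obtain rfl : n = _ := hlen
  have hmono : StrictMono (τ ∘ σ.symm) := fun x y hxy => by
    have hxy' := h (σ.symm x) (σ.symm y) (Fin.isLt _) (Fin.isLt _)
    rw [entry_val ⟨n, σ⟩, entry_val ⟨n, σ⟩, entry_val ⟨n, τ⟩, entry_val ⟨n, τ⟩] at hxy'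
    simpa using hxy' (by simpa using hxy)
  have hid (x : Fin n) : τ (σ.symm x) = x := congrFun (hmono.eq_id) x
  congr 1
  ext x
  simpa using congrArg Fin.val (hid (σ x)).symm

theorem eq_of_entry_eq {S T : PermPt} (hlen : S.1 = T.1)
    (h : ∀ i < S.1, entry S i = entry T i) : S = T :=
  eq_of_entry_lt_entry hlen fun i j hi hj hij => by rwa [← h i hi, ← h j hj]

/-- `f` lists the positions of an occurrence of the pattern `S` in `T`; its values at arguments
beyond the length of `S` are irrelevant. -/
structure IsOccurrence (f : ℕ → ℕ) (S T : PermPt) : Prop where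
  lt_length {i : ℕ} : i < S.1 → f i < T.1
  lt_of_lt {i j : ℕ} : i < j → j < S.1 → f i < f j
  entry_lt {i j : ℕ} : i < S.1 → j < S.1 → entry S i < entry S j → entry T (f i) < entry T (f j)

theorem IsOccurrence.entry_lt_iff {f : ℕ → ℕ} {S T : PermPt} (hf : IsOccurrence f S T) {i j : ℕ}
    (hi : i < S.1) (hj : j < S.1) : entry T (f i) < entry T (f j) ↔ entry S i < entry S j := by
  refine ⟨fun h => ?_, hf.entry_lt hi hj⟩
  obtain hlt | heq | hgt := lt_trichotomy (entry S i) (entry S j)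
  · exact hlt
  · rw [(entry S).injective heq] at h
    exact absurd h (lt_irrefl _)
  · exact absurd h (hf.entry_lt hj hi hgt).not_gt

theorem IsOccurrence.comp {f g : ℕ → ℕ} {R S T : PermPt} (hg : IsOccurrence g S T)
    (hf : IsOccurrence f R S) : IsOccurrence (g ∘ f) R T where
  lt_length hi := hg.lt_length (hf.lt_length hi)
  lt_of_lt hij hj := hg.lt_of_lt (hf.lt_of_lt hij hj) (hf.lt_length hj)
  entry_lt hi hj h := hg.entry_lt (hf.lt_length hi) (hf.lt_length hj) (hf.entry_lt hi hj h)

theorem isOccurrence_id (T : PermPt) : IsOccurrence id T T :=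
  ⟨id, fun h _ => h, fun _ _ => id⟩

theorem isOccurrence_of_fin {S T : PermPt} {f : Fin S.1 → Fin T.1} (hf : StrictMono f)
    (h : ∀ a b, S.2 a ≤ S.2 b ↔ T.2 (f a) ≤ T.2 (f b)) :
    IsOccurrence (fun i => if hi : i < S.1 then (f ⟨i, hi⟩ : ℕ) else 0) S T where
  lt_length hi := by simp [hi]
  lt_of_lt hij hj := by simpa [hj, hij.trans hj] using hf hij
  entry_lt {i j} hi hj hij := by
    rw [entry_val S ⟨i, hi⟩, entry_val S ⟨j, hj⟩, Fin.val_fin_lt, ← not_le, h, not_le] at hij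
    simpa only [hi, hj, dif_pos, entry_val, Fin.val_fin_lt] using hij

theorem ple_iff_exists_isOccurrence {S T : PermPt} : ple S T ↔ ∃ f, IsOccurrence f S T := by
  constructor
  · rintro ⟨f, hf, h⟩
    exact ⟨_, isOccurrence_of_fin hf h⟩
  · rintro ⟨f, hf⟩
    refine ⟨fun i => ⟨f i, hf.lt_length i.isLt⟩, fun i j hij => hf.lt_of_lt hij j.isLt,
      fun i j => ?_⟩
    rw [← not_lt, ← not_lt, not_iff_not, ← Fin.val_fin_lt, ← Fin.val_fin_lt, ← entry_val,
      ← entry_val, ← entry_val, ← entry_val]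
    exact (hf.entry_lt_iff j.isLt i.isLt).symm

theorem IsOccurrence.le_apply {f : ℕ → ℕ} {S T : PermPt} (hf : IsOccurrence f S T) {i : ℕ}
    (hi : i < S.1) : i ≤ f i := by
  induction i with
  | zero => exact Nat.zero_le _
  | succ i ih => exact (ih (by omega)).trans_lt (hf.lt_of_lt i.lt_succ_self hi)

theorem IsOccurrence.length_le {f : ℕ → ℕ} {S T : PermPt} (hf : IsOccurrence f S T) :
    S.1 ≤ T.1 := by
  by_contra! h
  exact (hf.le_apply h).not_gt (hf.lt_length h)

theorem IsOccurrence.eq {f : ℕ → ℕ} {S T : PermPt} (hf : IsOccurrence f S T)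
    (hlen : S.1 = T.1) : S = T := by
  have hmono : StrictMono fun i : Fin S.1 =>
      (⟨f i, (hf.lt_length i.isLt).trans_eq hlen.symm⟩ : Fin S.1) :=
    fun i j hij => hf.lt_of_lt hij j.isLt
  have hfix {i : ℕ} (hi : i < S.1) : f i = i :=
    congrArg Fin.val (congrFun hmono.eq_id ⟨i, hi⟩)
  refine eq_of_entry_lt_entry hlen fun i j hi hj hij => ?_
  simpa only [hfix hi, hfix hj] using hf.entry_lt hi hj hij

instance : PartialOrder PermPt where
  le := ple
  lt := plt
  le_refl T := ple_iff_exists_isOccurrence.2 ⟨id, isOccurrence_id T⟩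
  le_trans R S T hRS hST := by
    obtain ⟨f, hf⟩ := ple_iff_exists_isOccurrence.1 hRS
    obtain ⟨g, hg⟩ := ple_iff_exists_isOccurrence.1 hST
    exact ple_iff_exists_isOccurrence.2 ⟨g ∘ f, hg.comp hf⟩
  lt_iff_le_not_ge _ _ := Iff.rfl
  le_antisymm S T hST hTS := by
    obtain ⟨f, hf⟩ := ple_iff_exists_isOccurrence.1 hST
    obtain ⟨g, hg⟩ := ple_iff_exists_isOccurrence.1 hTS
    exact hf.eq (hf.length_le.antisymm hg.length_le)

theorem le_iff_exists_isOccurrence {S T : PermPt} : S ≤ T ↔ ∃ f, IsOccurrence f S T :=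
  ple_iff_exists_isOccurrence

instance : OrderBot PermPt where
  bot := pempty
  bot_le _ := le_iff_exists_isOccurrence.2
    ⟨id, ⟨fun h => absurd h (Nat.not_lt_zero _), fun _ h => absurd h (Nat.not_lt_zero _),
      fun h => absurd h (Nat.not_lt_zero _)⟩⟩

theorem eq_bot_of_length_eq_zero {T : PermPt} (hT : T.1 = 0) : T = ⊥ :=
  eq_of_entry_eq hT fun i hi => absurd hi (by omega)

theorem ne_bot_of_length_pos {T : PermPt} (hT : 0 < T.1) : T ≠ ⊥ := by
  rintro rfl
  exact absurd hT (lt_irrefl 0)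

/-- The flattening of the word `g 0, …, g (n - 1)`; ties between equal letters, which do not occur
below, are broken from left to right. -/
def flatten (n : ℕ) (g : ℕ → ℕ) : PermPt :=
  ⟨n, (Tuple.sort fun i : Fin n => g i)⁻¹⟩

theorem entry_flatten_lt_iff {n : ℕ} {g : ℕ → ℕ} (hg : g.Injective) {i j : ℕ} (hi : i < n)
    (hj : j < n) : entry (flatten n g) i < entry (flatten n g) j ↔ g i < g j := by
  set s := Tuple.sort fun i : Fin n => g i
  have hmono : StrictMono ((fun i : Fin n => g i) ∘ s) :=
    (Tuple.monotone_sort _).strictMono_of_injective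
      ((hg.comp Fin.val_injective).comp s.injective)
  rw [entry_val (flatten n g) ⟨i, hi⟩, entry_val (flatten n g) ⟨j, hj⟩]
  calc s⁻¹ ⟨i, hi⟩ < s⁻¹ ⟨j, hj⟩ ↔ g (s (s⁻¹ ⟨i, hi⟩)) < g (s (s⁻¹ ⟨j, hj⟩)) :=
        hmono.lt_iff_lt.symm
    _ ↔ g i < g j := by simp

/-- The increasing enumeration of the positions outside the window `[p, p + m)`. -/
def skip (p m i : ℕ) : ℕ := if i < p then i else i + m

theorem skip_strictMono (p m : ℕ) : StrictMono (skip p m) := fun i j hij => by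
  grind [skip]

/-- The pattern obtained by removing the letters at the positions in `[p, p + m)`; the window is
meant to satisfy `p + m ≤ T.1`. -/
noncomputable def delete (T : PermPt) (p m : ℕ) : PermPt :=
  flatten (T.1 - m) (entry T ∘ skip p m)

theorem entry_delete_lt_iff {T : PermPt} {p m i j : ℕ} (hi : i < T.1 - m) (hj : j < T.1 - m) :
    entry (delete T p m) i < entry (delete T p m) j ↔
      entry T (skip p m i) < entry T (skip p m j) :=
  entry_flatten_lt_iff ((entry T).injective.comp (skip_strictMono p m).injective) hi hj

theorem isOccurrence_skip (T : PermPt) (p m : ℕ) :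
    IsOccurrence (skip p m) (delete T p m) T where
  lt_length {i} (hi : i < T.1 - m) := by grind [skip]
  lt_of_lt hij _ := skip_strictMono p m hij
  entry_lt hi hj := (entry_delete_lt_iff hi hj).1

theorem delete_le (T : PermPt) (p m : ℕ) : delete T p m ≤ T :=
  le_iff_exists_isOccurrence.2 ⟨_, isOccurrence_skip T p m⟩

theorem eq_delete {S T : PermPt} {p m : ℕ} (hlen : S.1 = T.1 - m)
    (h : ∀ i j, i < S.1 → j < S.1 → entry S i < entry S j →
      entry T (skip p m i) < entry T (skip p m j)) : S = delete T p m :=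
  eq_of_entry_lt_entry hlen fun i j hi hj hij =>
    (entry_delete_lt_iff (hlen ▸ hi) (hlen ▸ hj)).2 (h i j hi hj hij)

theorem IsOccurrence.le_delete {f : ℕ → ℕ} {S T : PermPt} {p m : ℕ} (hf : IsOccurrence f S T)
    (hpm : p + m ≤ T.1) (havoid : ∀ i < S.1, f i < p ∨ p + m ≤ f i) : S ≤ delete T p m := by
  have hskip {i : ℕ} (hi : i < S.1) : skip p m (if f i < p then f i else f i - m) = f i := by
    grind [skip]
  have hlt {i : ℕ} (hi : i < S.1) : (if f i < p then f i else f i - m) < T.1 - m := by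
    grind [hf.lt_length hi]
  refine le_iff_exists_isOccurrence.2 ⟨fun i => if f i < p then f i else f i - m, hlt,
    fun {i j} hij hj => ?_, fun {i j} hi hj hij => ?_⟩
  · rw [← (skip_strictMono p m).lt_iff_lt, hskip hj, hskip (hij.trans hj)]
    exact hf.lt_of_lt hij hj
  · rw [entry_delete_lt_iff (hlt hi) (hlt hj), hskip hi, hskip hj]
    exact hf.entry_lt hi hj hij

theorem IsOccurrence.exists_le_delete {f : ℕ → ℕ} {S T : PermPt} (hf : IsOccurrence f S T)
    (hlen : S.1 < T.1) : ∃ p, S ≤ delete T p 1 := by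
  obtain ⟨p, hp, hpf⟩ : ∃ p ∈ Finset.range T.1, p ∉ (Finset.range S.1).image f :=
    Finset.exists_mem_notMem_of_card_lt_card
      (Finset.card_image_le.trans_lt (by simpa only [Finset.card_range] using hlen))
  rw [Finset.mem_range] at hp
  simp only [Finset.mem_image, Finset.mem_range, not_exists, not_and] at hpf
  exact ⟨p, hf.le_delete hp fun i hi => by grind⟩

theorem length_lt_of_lt {S T : PermPt} (h : S < T) : S.1 < T.1 := by
  obtain ⟨f, hf⟩ := le_iff_exists_isOccurrence.1 h.le
  exact hf.length_le.lt_of_ne fun hlen => h.ne (hf.eq hlen)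

theorem length_add_one_eq_of_covBy {S T : PermPt} (h : S ⋖ T) : S.1 + 1 = T.1 := by
  have hlen := length_lt_of_lt h.lt
  obtain ⟨f, hf⟩ := le_iff_exists_isOccurrence.1 h.le
  obtain ⟨p, hle⟩ := hf.exists_le_delete hlen
  have hdelete : (delete T p 1).1 = T.1 - 1 := rfl
  have hlt : delete T p 1 < T := (delete_le T p 1).lt_of_ne fun heq => by
    rw [heq] at hdelete
    omega
  have heq : S = delete T p 1 := hle.eq_of_not_lt fun hlt' => h.2 hlt' hlt
  rw [heq, hdelete]
  omega

noncomputable instance : GradeOrder ℕ PermPt where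
  grade := Sigma.fst
  grade_strictMono _ _ := length_lt_of_lt
  covBy_grade _ _ h := Nat.covBy_iff_add_one_eq.2 (length_add_one_eq_of_covBy h)

/-! ### Direct sums -/

theorem pds_castAdd {m n : ℕ} (α : Equiv.Perm (Fin m)) (β : Equiv.Perm (Fin n)) (i : Fin m) :
    pds α β (Fin.castAdd n i) = Fin.castAdd n (α i) := by
  simp [pds]

theorem pds_natAdd {m n : ℕ} (α : Equiv.Perm (Fin m)) (β : Equiv.Perm (Fin n)) (i : Fin n) :
    pds α β (Fin.natAdd m i) = Fin.natAdd m (β i) := by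
  simp [pds]

theorem entry_pdsP_left (a b : PermPt) {i : ℕ} (hi : i < a.1) :
    entry (pdsP a b) i = entry a i := by
  have h := entry_val (pdsP a b) (Fin.castAdd b.1 ⟨i, hi⟩)
  rw [entry_val a ⟨i, hi⟩]
  exact h.trans (congrArg Fin.val (pds_castAdd a.2 b.2 ⟨i, hi⟩))

theorem entry_pdsP_right (a b : PermPt) (i : ℕ) :
    entry (pdsP a b) (a.1 + i) = a.1 + entry b i := by
  obtain hi | hi := lt_or_ge i b.1
  · have h := entry_val (pdsP a b) (Fin.natAdd a.1 ⟨i, hi⟩)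
    rw [entry_val b ⟨i, hi⟩]
    exact h.trans (congrArg Fin.val (pds_natAdd a.2 b.2 ⟨i, hi⟩))
  · rw [entry_of_le hi, entry_of_le (show a.1 + b.1 ≤ a.1 + i by omega)]

theorem entry_pdsP (a b : PermPt) (i : ℕ) :
    entry (pdsP a b) i = if i < a.1 then entry a i else a.1 + entry b (i - a.1) := by
  split_ifs with hi
  · exact entry_pdsP_left a b hi
  · rw [← entry_pdsP_right, Nat.add_sub_cancel' (not_lt.1 hi)]

theorem eq_pdsP_of_forall_entry_lt {x : PermPt} {k : ℕ} (hk : k ≤ x.1)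
    (h : ∀ i j, i < k → k ≤ j → j < x.1 → entry x i < entry x j) :
    x = pdsP (delete x k (x.1 - k)) (delete x 0 k) := by
  have hleft : (delete x k (x.1 - k)).1 = k := Nat.sub_sub_self hk
  have hlen : (pdsP (delete x k (x.1 - k)) (delete x 0 k)).1 = x.1 := by
    change x.1 - (x.1 - k) + (x.1 - k) = x.1
    omega
  refine (eq_of_entry_lt_entry hlen fun i j hi hj hij => ?_).symm
  rw [hlen] at hi hj
  rw [entry_pdsP, entry_pdsP, hleft] at hij
  split_ifs at hij with hik hjk hjk
  · simpa [skip, hik, hjk] using (entry_delete_lt_iff (by omega) (by omega)).1 hij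
  · exact h i j hik (not_lt.1 hjk) hj
  · have := entry_lt_length (T := delete x k (x.1 - k)) (hjk.trans_eq hleft.symm)
    omega
  · simpa [skip, Nat.sub_add_cancel (not_lt.1 hik), Nat.sub_add_cancel (not_lt.1 hjk)] using
      (entry_delete_lt_iff (by omega) (by omega)).1 ((add_lt_add_iff_left k).1 hij)

theorem exists_eq_pdsP_left {x y : PermPt} (hlen : y.1 ≤ x.1)
    (h : ∀ i < y.1, entry x i = entry y i) : ∃ z, x = pdsP y z := by
  have hcut : x = pdsP (delete x y.1 (x.1 - y.1)) (delete x 0 y.1) := by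
    refine eq_pdsP_of_forall_entry_lt hlen fun i j hi hj _ => ?_
    rw [h i hi]
    refine (entry_lt_length hi).trans_le (not_lt.1 fun hlt => ?_)
    obtain ⟨k, hk, hkj⟩ := exists_entry_eq hlt
    have hkj' : k = j := (entry x).injective ((h k hk).trans hkj)
    omega
  have hleft : (delete x y.1 (x.1 - y.1)).1 = y.1 := Nat.sub_sub_self hlen
  have hy : delete x y.1 (x.1 - y.1) = y := eq_of_entry_eq hleft fun i hi => by
    rw [← h i (hi.trans_eq hleft)]
    conv_rhs => rw [hcut]
    exact (entry_pdsP_left _ _ hi).symm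
  exact ⟨_, hcut.trans (by rw [hy])⟩

theorem exists_eq_pdsP_right {x y : PermPt} {a : ℕ} (hlen : x.1 = a + y.1)
    (h : ∀ i < y.1, entry x (a + i) = a + entry y i) : ∃ z, z.1 = a ∧ x = pdsP z y := by
  have hcut : x = pdsP (delete x a (x.1 - a)) (delete x 0 a) := by
    refine eq_pdsP_of_forall_entry_lt (by omega) fun i j hi hj hjx => ?_
    have hje : a ≤ entry x j := by
      rw [← Nat.add_sub_cancel' hj, h _ (by omega)]
      omega
    refine lt_of_lt_of_le (not_le.1 fun hle => ?_) hje
    have hlt := entry_lt_length (T := x) (i := i) (by omega)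
    obtain ⟨k, hk, hki⟩ := exists_entry_eq (T := y) (k := entry x i - a) (by omega)
    have hik : a + k = i := (entry x).injective (by rw [h k hk]; omega)
    omega
  have hleft : (delete x a (x.1 - a)).1 = a := Nat.sub_sub_self (by omega)
  have hright : (delete x 0 a).1 = y.1 := Nat.sub_eq_of_eq_add' hlen
  have hy : delete x 0 a = y := eq_of_entry_eq hright fun i hi => by
    have h' := h i (hi.trans_eq hright)
    have hi' := entry_pdsP_right (delete x a (x.1 - a)) (delete x 0 a) i
    rw [← hcut, hleft, h'] at hi'
    omega
  exact ⟨_, hleft, hcut.trans (by rw [hy])⟩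

theorem pdsP_eq_pdsP {a b c d : PermPt} (h : pdsP a b = pdsP c d) (hlen : a.1 = c.1) :
    a = c ∧ b = d := by
  have hsum : a.1 + b.1 = c.1 + d.1 := congrArg Sigma.fst h
  refine ⟨eq_of_entry_eq hlen fun i hi => ?_, eq_of_entry_eq (by omega) fun i _ => ?_⟩
  · rw [← entry_pdsP_left a b hi, h, entry_pdsP_left c d (hlen ▸ hi)]
  · have hi := entry_pdsP_right a b i
    rw [h, hlen, entry_pdsP_right] at hi
    omega

theorem isOccurrence_pdsP {f g : ℕ → ℕ} {a a' b b' : PermPt} (hf : IsOccurrence f a a')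
    (hg : IsOccurrence g b b') :
    IsOccurrence (fun i => if i < a.1 then f i else a'.1 + g (i - a.1)) (pdsP a b)
      (pdsP a' b') where
  lt_length {i} (hi : i < a.1 + b.1) := by
    change _ < a'.1 + b'.1
    have hfi := hf.lt_length (i := i)
    have hgi := hg.lt_length (i := i - a.1)
    grind
  lt_of_lt {i j} hij (hj : j < a.1 + b.1) := by
    have hfi := hf.lt_length (i := i)
    have hfij := hf.lt_of_lt hij
    have hgij := hg.lt_of_lt (i := i - a.1) (j := j - a.1)
    grind
  entry_lt {i j} (hi : i < a.1 + b.1) (hj : j < a.1 + b.1) hij := by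
    have hfi := hf.lt_length (i := i)
    have hfj := hf.lt_length (i := j)
    rw [entry_pdsP, entry_pdsP] at hij
    split_ifs at hij ⊢ with hia hja hja
    · rw [entry_pdsP_left _ _ (hfi hia), entry_pdsP_left _ _ (hfj hja)]
      exact hf.entry_lt hia hja hij
    · rw [entry_pdsP_left _ _ (hfi hia), entry_pdsP_right]
      have := entry_lt_length (hfi hia)
      omega
    · have := entry_lt_length hja
      omega
    · rw [entry_pdsP_right, entry_pdsP_right]
      have := hg.entry_lt (i := i - a.1) (j := j - a.1) (by omega) (by omega) (by omega)
      omega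

theorem IsOccurrence.exists_cut {f : ℕ → ℕ} {S T : PermPt} (hf : IsOccurrence f S T) (p : ℕ) :
    ∃ k ≤ S.1, (∀ i < k, f i < p) ∧ ∀ i, k ≤ i → i < S.1 → p ≤ f i := by
  have hex : ∃ k, S.1 ≤ k ∨ p ≤ f k := ⟨S.1, Or.inl le_rfl⟩
  refine ⟨Nat.find hex, Nat.find_min' hex (Or.inl le_rfl), fun i hi => ?_, fun i hi hiS => ?_⟩
  · exact not_le.1 fun h => Nat.find_min hex hi (Or.inr h)
  · have hp : p ≤ f (Nat.find hex) := (Nat.find_spec hex).resolve_left (by omega)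
    obtain heq | hlt := hi.eq_or_lt
    · exact heq ▸ hp
    · exact hp.trans (hf.lt_of_lt hlt hiS).le

theorem IsOccurrence.of_pdsP_left {f : ℕ → ℕ} {x a b : PermPt}
    (hf : IsOccurrence f x (pdsP a b)) (h : ∀ i < x.1, f i < a.1) : IsOccurrence f x a where
  lt_length hi := h _ hi
  lt_of_lt := hf.lt_of_lt
  entry_lt hi hj hij := by
    simpa only [entry_pdsP_left _ _ (h _ hi), entry_pdsP_left _ _ (h _ hj)] using
      hf.entry_lt hi hj hij

theorem IsOccurrence.of_pdsP_right {f : ℕ → ℕ} {x a b : PermPt}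
    (hf : IsOccurrence f x (pdsP a b)) (h : ∀ i < x.1, a.1 ≤ f i) :
    IsOccurrence (fun i => f i - a.1) x b where
  lt_length {i} hi := by
    have hlt : f i < a.1 + b.1 := hf.lt_length hi
    have := h i hi
    omega
  lt_of_lt {i j} hij hj := by
    have := hf.lt_of_lt hij hj
    have := h i (hij.trans hj)
    omega
  entry_lt {i j} hi hj hij := by
    have hlt := hf.entry_lt hi hj hij
    rwa [← Nat.add_sub_cancel' (h i hi), ← Nat.add_sub_cancel' (h j hj), entry_pdsP_right,
      entry_pdsP_right, add_lt_add_iff_left] at hlt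

theorem exists_eq_pdsP_of_le {x a b : PermPt} (h : x ≤ pdsP a b) :
    ∃ x₁ ≤ a, ∃ x₂ ≤ b, x = pdsP x₁ x₂ := by
  obtain ⟨f, hf⟩ := le_iff_exists_isOccurrence.1 h
  obtain ⟨k, hk, hleft, hright⟩ := hf.exists_cut a.1
  have hlen : (delete x k (x.1 - k)).1 = k := Nat.sub_sub_self hk
  have hle₁ : delete x k (x.1 - k) ≤ a :=
    le_iff_exists_isOccurrence.2 ⟨_, (hf.comp (isOccurrence_skip _ _ _)).of_pdsP_left fun i hi => by
      rw [hlen] at hi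
      simpa [skip, hi] using hleft i hi⟩
  have hle₂ : delete x 0 k ≤ b :=
    le_iff_exists_isOccurrence.2 ⟨_, (hf.comp (isOccurrence_skip _ _ _)).of_pdsP_right
      fun i (hi : i < x.1 - k) => by
        simpa [skip] using hright (i + k) (by omega) (by omega)⟩
  refine ⟨_, hle₁, _, hle₂, eq_pdsP_of_forall_entry_lt hk fun i j hi hj hjx => ?_⟩
  rw [← hf.entry_lt_iff (by omega) hjx, entry_pdsP_left _ _ (hleft i hi),
    ← Nat.add_sub_cancel' (hright j hj hjx), entry_pdsP_right]
  exact Nat.lt_add_right _ (entry_lt_length (hleft i hi))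

theorem pdsP_mono {a a' b b' : PermPt} (ha : a ≤ a') (hb : b ≤ b') : pdsP a b ≤ pdsP a' b' := by
  obtain ⟨f, hf⟩ := le_iff_exists_isOccurrence.1 ha
  obtain ⟨g, hg⟩ := le_iff_exists_isOccurrence.1 hb
  exact le_iff_exists_isOccurrence.2 ⟨_, isOccurrence_pdsP hf hg⟩

theorem pdsP_assoc (a b c : PermPt) : pdsP (pdsP a b) c = pdsP a (pdsP b c) := by
  refine eq_of_entry_eq (Nat.add_assoc a.1 b.1 c.1) fun i _ => ?_
  have hlen : (pdsP a b).1 = a.1 + b.1 := rfl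
  rw [entry_pdsP (pdsP a b), entry_pdsP a b, entry_pdsP a, entry_pdsP b, hlen, Nat.sub_sub]
  grind

theorem isSum_pdsP : IsSum pdsP where
  grade_op _ _ := rfl
  mono := pdsP_mono
  assoc := pdsP_assoc
  bot_op a := eq_of_entry_eq (Nat.zero_add a.1) fun i _ => by
    simpa [show (⊥ : PermPt).1 = 0 from rfl] using entry_pdsP_right ⊥ a i
  op_bot a := eq_of_entry_eq (Nat.add_zero a.1) fun _ hi => entry_pdsP_left a ⊥ hi
  exists_eq_of_le := exists_eq_pdsP_of_le
  exists_eq_of_op_eq {a b c d} h hac := by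
    have hac : a.1 ≤ c.1 := hac
    obtain ⟨z, rfl⟩ := exists_eq_pdsP_left hac fun i hi => by
      rw [← entry_pdsP_left a b hi, h, entry_pdsP_left c d (hi.trans_le hac)]
    exact ⟨z, rfl, (pdsP_eq_pdsP (h.trans (pdsP_assoc a z d)) rfl).2⟩

theorem delete_pdsP_left {A B : PermPt} {p m : ℕ} (h : p + m ≤ A.1) :
    delete (pdsP A B) p m = pdsP (delete A p m) B := by
  have hlen : (delete A p m).1 = A.1 - m := rfl
  have hB (i : ℕ) : A.1 - m ≤ i → skip p m i = A.1 + (i - (A.1 - m)) := by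
    grind [skip]
  have hA (i : ℕ) : i < A.1 - m → skip p m i < A.1 := by
    grind [skip]
  refine (eq_delete (show A.1 - m + B.1 = A.1 + B.1 - m by omega) fun i j _ _ hij => ?_).symm
  rw [entry_pdsP, entry_pdsP, hlen] at hij
  split_ifs at hij with hi hj hj
  · rw [entry_pdsP_left _ _ (hA i hi), entry_pdsP_left _ _ (hA j hj)]
    exact (entry_delete_lt_iff hi hj).1 hij
  · rw [entry_pdsP_left _ _ (hA i hi), hB j (by omega), entry_pdsP_right]
    exact Nat.lt_add_right _ (entry_lt_length (hA i hi))
  · have := entry_lt_length (T := delete A p m) hj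
    omega
  · rw [hB i (by omega), hB j (by omega), entry_pdsP_right, entry_pdsP_right]
    omega

theorem delete_pdsP_right {A B : PermPt} {p m : ℕ} (h : p + m ≤ B.1) :
    delete (pdsP A B) (A.1 + p) m = pdsP A (delete B p m) := by
  have hlen : (delete B p m).1 = B.1 - m := rfl
  have hA (i : ℕ) : i < A.1 → skip (A.1 + p) m i = i := by
    grind [skip]
  have hB (i : ℕ) : A.1 ≤ i → skip (A.1 + p) m i = A.1 + skip p m (i - A.1) := by
    grind [skip]
  refine (eq_delete (show A.1 + (B.1 - m) = A.1 + B.1 - m by omega)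
    fun i j (hi : i < A.1 + (B.1 - m)) (hj : j < A.1 + (B.1 - m)) hij => ?_).symm
  rw [entry_pdsP, entry_pdsP] at hij
  split_ifs at hij with hi' hj' hj'
  · rw [hA i hi', hA j hj', entry_pdsP_left _ _ hi', entry_pdsP_left _ _ hj']
    exact hij
  · rw [hA i hi', hB j (by omega), entry_pdsP_left _ _ hi', entry_pdsP_right]
    exact Nat.lt_add_right _ (entry_lt_length hi')
  · have := entry_lt_length hj'
    omega
  · rw [hB i (by omega), hB j (by omega), entry_pdsP_right, entry_pdsP_right, add_lt_add_iff_left,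
      ← entry_delete_lt_iff (by omega) (by omega)]
    omega

theorem delete_pdsP_left_self (A B : PermPt) : delete (pdsP A B) 0 A.1 = B := by
  rw [delete_pdsP_left (by omega), eq_bot_of_length_eq_zero (T := delete A 0 A.1) (Nat.sub_self _),
    isSum_pdsP.bot_op]

/-! ### Complements and skew sums -/

/-- The complement of a permutation, obtained by reversing the order of its values. It exchanges
direct and skew sums. -/
def complement (T : PermPt) : PermPt :=
  ⟨T.1, T.2.trans Fin.revPerm⟩

theorem entry_complement_add {T : PermPt} {i : ℕ} (hi : i < T.1) :
    entry (complement T) i + entry T i + 1 = T.1 := by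
  have hval : entry (complement T) i = T.1 - (T.2 ⟨i, hi⟩ + 1) :=
    (entry_val (complement T) ⟨i, hi⟩).trans (Fin.val_rev _)
  have := (T.2 ⟨i, hi⟩).isLt
  rw [hval, entry_val T ⟨i, hi⟩]
  omega

theorem entry_complement_lt_iff {T : PermPt} {i j : ℕ} (hi : i < T.1) (hj : j < T.1) :
    entry (complement T) i < entry (complement T) j ↔ entry T j < entry T i := by
  have := entry_complement_add hi
  have := entry_complement_add hj
  omega

theorem complement_complement (T : PermPt) : complement (complement T) = T :=
  eq_of_entry_lt_entry rfl fun i j (hi : i < T.1) (hj : j < T.1) hij =>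
    (entry_complement_lt_iff hj hi).1 ((entry_complement_lt_iff (T := complement T) hi hj).1 hij)

theorem complement_mono : Monotone complement := fun S T h => by
  obtain ⟨f, hf⟩ := le_iff_exists_isOccurrence.1 h
  exact le_iff_exists_isOccurrence.2 ⟨f, hf.lt_length, hf.lt_of_lt, fun {i j} (hi : i < S.1)
    (hj : j < S.1) hij => (entry_complement_lt_iff (hf.lt_length hi) (hf.lt_length hj)).2
      (hf.entry_lt hj hi ((entry_complement_lt_iff hi hj).1 hij))⟩

/-- Complementation as an automorphism of the pattern order. -/
def complementIso : PermPt ≃o PermPt where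
  toFun := complement
  invFun := complement
  left_inv := complement_complement
  right_inv := complement_complement
  map_rel_iff' {S T} := ⟨fun h => by
    simpa only [Equiv.coe_fn_mk, complement_complement] using complement_mono h,
    fun h => complement_mono h⟩

theorem delete_complement (T : PermPt) (p m : ℕ) :
    delete (complement T) p m = complement (delete T p m) := by
  have hlen : (complement (delete T p m)).1 = T.1 - m := rfl
  have hocc := isOccurrence_skip T p m
  refine (eq_delete (T := complement T) hlen fun i j hi hj hij => ?_).symm
  rw [entry_complement_lt_iff (hocc.lt_length hi) (hocc.lt_length hj)]
  exact hocc.entry_lt hj hi ((entry_complement_lt_iff (T := delete T p m) hi hj).1 hij)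

theorem pss_castAdd {m n : ℕ} (α : Equiv.Perm (Fin m)) (β : Equiv.Perm (Fin n)) (i : Fin m) :
    (pss α β (Fin.castAdd n i) : ℕ) = n + α i := by
  simp [pss, add_comm]

theorem pss_natAdd {m n : ℕ} (α : Equiv.Perm (Fin m)) (β : Equiv.Perm (Fin n)) (i : Fin n) :
    (pss α β (Fin.natAdd m i) : ℕ) = β i := by
  simp [pss]

theorem entry_pssP_left (a b : PermPt) {i : ℕ} (hi : i < a.1) :
    entry (pssP a b) i = b.1 + entry a i := by
  have h := entry_val (pssP a b) (Fin.castAdd b.1 ⟨i, hi⟩)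
  rw [entry_val a ⟨i, hi⟩]
  exact h.trans (pss_castAdd a.2 b.2 ⟨i, hi⟩)

theorem entry_pssP_right (a b : PermPt) {i : ℕ} (hi : i < b.1) :
    entry (pssP a b) (a.1 + i) = entry b i := by
  have h := entry_val (pssP a b) (Fin.natAdd a.1 ⟨i, hi⟩)
  rw [entry_val b ⟨i, hi⟩]
  exact h.trans (pss_natAdd a.2 b.2 ⟨i, hi⟩)

theorem complement_pdsP (a b : PermPt) :
    complement (pdsP a b) = pssP (complement a) (complement b) := by
  refine eq_of_entry_eq rfl fun i (hi : i < a.1 + b.1) => ?_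
  have h : entry (complement (pdsP a b)) i + entry (pdsP a b) i + 1 = a.1 + b.1 :=
    entry_complement_add hi
  obtain hia | hia := lt_or_ge i a.1
  · have hca : entry (pssP (complement a) (complement b)) i = b.1 + entry (complement a) i :=
      entry_pssP_left _ _ hia
    have ha := entry_complement_add hia
    rw [entry_pdsP_left a b hia] at h
    omega
  · obtain ⟨i, rfl⟩ := Nat.exists_eq_add_of_le hia
    have hib : i < b.1 := by omega
    have hcb : entry (pssP (complement a) (complement b)) (a.1 + i) = entry (complement b) i :=
      entry_pssP_right (complement a) (complement b) hib
    have hb := entry_complement_add hib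
    rw [entry_pdsP_right a b i] at h
    omega

theorem complement_pssP (a b : PermPt) :
    complement (pssP a b) = pdsP (complement a) (complement b) := by
  rw [← complement_complement (pdsP _ _), complement_pdsP, complement_complement,
    complement_complement]

theorem isSum_pssP : IsSum pssP :=
  isSum_pdsP.of_orderIso complementIso (fun _ => rfl) complement_pdsP

theorem indecomposable_pdsP_of_not_decomp {m : ℕ} (hm : m ≠ 0) {π : Equiv.Perm (Fin m)}
    (hπ : ¬ Decomp π) : Indecomposable pdsP ⟨m, π⟩ := by
  refine ⟨fun h => hm (congrArg Sigma.fst h), fun a b h => ?_⟩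
  by_contra! hab
  have hlen : m = a.1 + b.1 := congrArg Sigma.fst h
  have hb := grade_pos_of_ne_bot hab.2
  refine hπ ⟨a.1, grade_pos_of_ne_bot hab.1, hlen ▸ Nat.lt_add_of_pos_right hb, fun i hi => ?_⟩
  have hval : entry ⟨m, π⟩ i = π i := entry_val ⟨m, π⟩ i
  rw [← hval, h, entry_pdsP_left a b hi]
  exact entry_lt_length hi

theorem indecomposable_pssP_of_not_skewDecomp {m : ℕ} (hm : m ≠ 0) {π : Equiv.Perm (Fin m)}
    (hπ : ¬ SkewDecomp π) : Indecomposable pssP ⟨m, π⟩ := by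
  refine ⟨fun h => hm (congrArg Sigma.fst h), fun a b h => ?_⟩
  by_contra! hab
  have hlen : m = a.1 + b.1 := congrArg Sigma.fst h
  have hb := grade_pos_of_ne_bot hab.2
  refine hπ ⟨a.1, grade_pos_of_ne_bot hab.1, hlen ▸ Nat.lt_add_of_pos_right hb, fun i hi => ?_⟩
  have hval : entry ⟨m, π⟩ i = π i := entry_val ⟨m, π⟩ i
  rw [← hval, h, entry_pssP_left a b hi]
  omega

theorem pdsP_ne_pssP {a b c d : PermPt} (ha : a ≠ ⊥) (hb : b ≠ ⊥) (hc : c ≠ ⊥) (hd : d ≠ ⊥) :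
    pdsP a b ≠ pssP c d := by
  intro h
  have ha' : 0 < a.1 := grade_pos_of_ne_bot ha
  have hb' : 0 < b.1 := grade_pos_of_ne_bot hb
  have hc' : 0 < c.1 := grade_pos_of_ne_bot hc
  have hd' : 0 < d.1 := grade_pos_of_ne_bot hd
  have hlen : a.1 + b.1 = c.1 + d.1 := congrArg Sigma.fst h
  have hfirst : entry a 0 = d.1 + entry c 0 := by
    rw [← entry_pdsP_left a b ha', h, entry_pssP_left c d hc']
  have hlast : a.1 + entry b (b.1 - 1) = entry d (d.1 - 1) := by
    rw [← entry_pdsP_right, h, ← entry_pssP_right c d (by omega)]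
    congr 1
    omega
  have := entry_lt_length ha'
  have := entry_lt_length (T := d) (i := d.1 - 1) (by omega)
  omega

/-! ### Doubled blocks -/

/-- The factor of `T` at the positions `a, …, a + Q.1 - 1` consists of consecutive values and
flattens to `Q`. The least of these values is `v`, an integer so that blocks can be shifted. -/
def HasBlock (T : PermPt) (a : ℕ) (Q : PermPt) : Prop :=
  a + Q.1 ≤ T.1 ∧ ∃ v : ℤ, ∀ i < Q.1, (entry T (a + i) : ℤ) = v + entry Q i

theorem hasBlock_of_forall_fin {T Q : PermPt} {a v : ℕ} (hlen : a + Q.1 ≤ T.1)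
    (h : ∀ i : Fin Q.1, (T.2 ⟨a + i, by omega⟩ : ℕ) = v + Q.2 i) : HasBlock T a Q :=
  ⟨hlen, v, fun i hi => by
    rw [entry_val T ⟨a + i, by omega⟩, entry_val Q ⟨i, hi⟩]
    exact_mod_cast h ⟨i, hi⟩⟩

theorem HasBlock.complement {T Q : PermPt} {a : ℕ} (h : HasBlock T a Q) :
    HasBlock (complement T) a (complement Q) := by
  obtain ⟨hlen, v, hv⟩ := h
  refine ⟨hlen, T.1 - Q.1 - v, fun i (hi : i < Q.1) => ?_⟩
  have hT := entry_complement_add (T := T) (i := a + i) (by omega)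
  have hQ := entry_complement_add hi
  have := hv i hi
  omega

theorem HasBlock.of_pdsP_left {A B Q : PermPt} {a : ℕ} (h : HasBlock (pdsP A B) a Q)
    (ha : a + Q.1 ≤ A.1) : HasBlock A a Q := by
  obtain ⟨-, v, hv⟩ := h
  exact ⟨ha, v, fun i hi => by rw [← hv i hi, entry_pdsP_left _ _ (by omega)]⟩

theorem HasBlock.of_pdsP_right {A B Q : PermPt} {a : ℕ} (h : HasBlock (pdsP A B) (A.1 + a) Q) :
    HasBlock B a Q := by
  obtain ⟨hlen, v, hv⟩ := h
  have hlen : A.1 + a + Q.1 ≤ A.1 + B.1 := hlen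
  refine ⟨by omega, v - A.1, fun i hi => ?_⟩
  have := hv i hi
  rw [add_assoc, entry_pdsP_right] at this
  omega

theorem HasBlock.exists_eq_pdsP_of_lt {A B Q : PermPt} {a k : ℕ} (h : HasBlock (pdsP A B) a Q)
    (hA : A.1 = a + k) (hk : k < Q.1) : ∃ X Y, X.1 = k ∧ Q = pdsP X Y := by
  obtain ⟨-, v, hv⟩ := h
  refine ⟨_, _, Nat.sub_sub_self hk.le, eq_pdsP_of_forall_entry_lt hk.le fun i j hi hj hjQ => ?_⟩
  have hvi := hv i (hi.trans hk)
  have hvj := hv j hjQ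
  rw [entry_pdsP_left _ _ (by omega)] at hvi
  rw [show a + j = A.1 + (j - k) by omega, entry_pdsP_right] at hvj
  have := entry_lt_length (T := A) (i := a + i) (by omega)
  omega

theorem HasBlock.exists_eq_pdsP {A B X Y : PermPt} {a : ℕ} (h : HasBlock (pdsP A B) a (pdsP X Y))
    (hA : A.1 = a + X.1) (hX : X ≠ ⊥) (hY : Y ≠ ⊥) :
    (∃ A', A'.1 = a ∧ A = pdsP A' X) ∧ ∃ B', B = pdsP Y B' := by
  obtain ⟨hlen, v, hv⟩ := h
  have hlen : a + (X.1 + Y.1) ≤ A.1 + B.1 := hlen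
  replace hv : ∀ i < X.1 + Y.1, (entry (pdsP A B) (a + i) : ℤ) = v + entry (pdsP X Y) i := hv
  have hvX (i : ℕ) (hi : i < X.1) : (entry A (a + i) : ℤ) = v + entry X i := by
    rw [← entry_pdsP_left X Y hi, ← hv i (by omega), entry_pdsP_left A B (by omega)]
  have hvY (i : ℕ) (hi : i < Y.1) : (A.1 + entry B i : ℤ) = v + (X.1 + entry Y i) := by
    have := hv (X.1 + i) (by omega)
    rwa [← add_assoc, ← hA, entry_pdsP_right, entry_pdsP_right, Nat.cast_add, Nat.cast_add] at this
  have hva : v = a := by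
    have hXpos : 0 < X.1 := grade_pos_of_ne_bot hX
    obtain ⟨i, hi, hi'⟩ := exists_entry_eq (T := X) (k := X.1 - 1) (by omega)
    obtain ⟨j, hj, hj'⟩ := exists_entry_eq (T := Y) (k := 0) (grade_pos_of_ne_bot hY)
    have := hvX i hi
    have := hvY j hj
    have := entry_lt_length (T := A) (i := a + i) (by omega)
    omega
  subst hva
  refine ⟨exists_eq_pdsP_right hA fun i hi => ?_, exists_eq_pdsP_left (by omega) fun i hi => ?_⟩
  · exact_mod_cast hvX i hi
  · have := hvY i hi
    omega

/-- For every doubled block `P ⊕ P` or `P ⊖ P` of `T` with `P` indecomposable of length at least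
`3`, the open interval between `T` without the second copy of `P` and `T` is disconnected. This is
the induction hypothesis along the construction of a separable `T`. -/
def DoubledBlockDisconnected (T : PermPt) : Prop :=
  ∀ op, op = pdsP ∨ op = pssP → ∀ a P, Indecomposable op P → 3 ≤ P.1 → HasBlock T a (op P P) →
    ComparabilityDisconnected (Set.Ioo (delete T (a + P.1) P.1) T)

theorem isSum_of_eq_or_eq {op : PermPt → PermPt → PermPt} (hop : op = pdsP ∨ op = pssP) :
    IsSum op := by
  obtain rfl | rfl := hop
  exacts [isSum_pdsP, isSum_pssP]

theorem exists_complement_op_eq {op : PermPt → PermPt → PermPt} (hop : op = pdsP ∨ op = pssP) :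
    ∃ op', (op' = pdsP ∨ op' = pssP) ∧
      ∀ a b, complementIso (op a b) = op' (complementIso a) (complementIso b) := by
  obtain rfl | rfl := hop
  exacts [⟨pssP, Or.inr rfl, complement_pdsP⟩, ⟨pdsP, Or.inl rfl, complement_pssP⟩]

theorem DoubledBlockDisconnected.complement {T : PermPt} (hT : DoubledBlockDisconnected T) :
    DoubledBlockDisconnected (complement T) := by
  intro op hop a P hP hP3 hblock
  obtain ⟨op', hop', hc⟩ := exists_complement_op_eq hop
  have hblock' := hblock.complement
  rw [complement_complement] at hblock'
  have h := (hT op' hop' a (complementIso P) (hP.of_orderIso complementIso hc) hP3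
    (hc P P ▸ hblock')).image complementIso
  rw [OrderIso.image_Ioo] at h
  rw [delete_complement]
  exact h

theorem comparabilityDisconnected_pdsP_self (A B : PermPt) {P : PermPt}
    (hP : Indecomposable pdsP P) (hP3 : 3 ≤ P.1) :
    ComparabilityDisconnected (Set.Ioo (pdsP (pdsP A P) B) (pdsP (pdsP A P) (pdsP P B))) := by
  have hlen : P.1 + 3 ≤ (pdsP P P).1 := Nat.add_le_add_left hP3 P.1
  have hlenA : (pdsP A P).1 + 3 ≤ (pdsP A (pdsP P P)).1 :=
    (Nat.add_assoc A.1 P.1 3).trans_le (Nat.add_le_add_left hlen A.1)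
  have h := isSum_pdsP.comparabilityDisconnected_Ioo_op_self hP (Nat.le_of_succ_le hP3)
  have hA := isSum_pdsP.comparabilityDisconnected_op_left A hlen h
  have hAB := isSum_pdsP.comparabilityDisconnected_op_right B hlenA hA
  rwa [← pdsP_assoc A P P, pdsP_assoc (pdsP A P) P B] at hAB

theorem comparabilityDisconnected_delete_of_straddle {A B P : PermPt} {a : ℕ}
    {op : PermPt → PermPt → PermPt} (hop : op = pdsP ∨ op = pssP) (hP : Indecomposable op P)
    (hP3 : 3 ≤ P.1) (hblock : HasBlock (pdsP A B) a (op P P)) (ha : a < A.1)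
    (hA : A.1 < a + (P.1 + P.1)) :
    ComparabilityDisconnected (Set.Ioo (delete (pdsP A B) (a + P.1) P.1) (pdsP A B)) := by
  have hlen : (op P P).1 = P.1 + P.1 := (isSum_of_eq_or_eq hop).grade_op P P
  obtain ⟨X, Y, hX, hQ⟩ := hblock.exists_eq_pdsP_of_lt (k := A.1 - a) (by omega) (by omega)
  have hXY : (op P P).1 = X.1 + Y.1 := congrArg Sigma.fst hQ
  have hX0 : X ≠ ⊥ := ne_bot_of_length_pos (by omega)
  have hY0 : Y ≠ ⊥ := ne_bot_of_length_pos (by omega)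
  obtain rfl | rfl := hop
  · obtain ⟨rfl, rfl⟩ := isSum_pdsP.eq_of_op_self_eq hP hX0 hY0 hQ
    obtain ⟨⟨A, rfl, rfl⟩, B, rfl⟩ := hblock.exists_eq_pdsP (by omega) hX0 hY0
    have hdelete : delete (pdsP (pdsP A P) (pdsP P B)) (A.1 + P.1) P.1 = pdsP (pdsP A P) B := by
      conv_rhs => rw [← delete_pdsP_left_self P B]
      exact delete_pdsP_right (A := pdsP A P) (p := 0) (by simp [pdsP])
    rw [hdelete]
    exact comparabilityDisconnected_pdsP_self A B hP hP3
  · exact absurd hQ.symm (pdsP_ne_pssP hX0 hY0 hP.1 hP.1)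

theorem doubledBlockDisconnected_pdsP {A B : PermPt} (hA : DoubledBlockDisconnected A)
    (hB : DoubledBlockDisconnected B) : DoubledBlockDisconnected (pdsP A B) := by
  intro op hop a P hP hP3 hblock
  have hlen : (op P P).1 = P.1 + P.1 := (isSum_of_eq_or_eq hop).grade_op P P
  have hle : a + (op P P).1 ≤ A.1 + B.1 := hblock.1
  have hgrade (T : PermPt) (p : ℕ) (hT : P.1 ≤ T.1) :
      grade ℕ (delete T p P.1) + 3 ≤ grade ℕ T := by
    change T.1 - P.1 + 3 ≤ T.1
    omega
  obtain hleft | hA' := le_or_gt (a + (op P P).1) A.1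
  · rw [delete_pdsP_left (by omega)]
    exact isSum_pdsP.comparabilityDisconnected_op_right B (hgrade A _ (by omega))
      (hA op hop a P hP hP3 (hblock.of_pdsP_left hleft))
  obtain ha | hright := lt_or_ge a A.1
  · exact comparabilityDisconnected_delete_of_straddle hop hP hP3 hblock ha (by omega)
  · obtain ⟨a, rfl⟩ := Nat.exists_eq_add_of_le hright
    rw [add_assoc, delete_pdsP_right (by omega)]
    exact isSum_pdsP.comparabilityDisconnected_op_left A (hgrade B _ (by omega))
      (hB op hop a P hP hP3 hblock.of_pdsP_right)

theorem doubledBlockDisconnected_of_separable {T : PermPt} (hT : Separable T) :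
    DoubledBlockDisconnected T := by
  induction hT with
  | one =>
    intro op hop a P _ hP3 hblock
    have hlen : (op P P).1 = P.1 + P.1 := (isSum_of_eq_or_eq hop).grade_op P P
    have hle : a + (op P P).1 ≤ 1 := hblock.1
    omega
  | ds A B _ _ hA hB => exact doubledBlockDisconnected_pdsP hA hB
  | ss A B _ _ hA hB =>
    rw [← complement_complement (pssP A B), complement_pssP]
    exact (doubledBlockDisconnected_pdsP hA.complement hB.complement).complement

theorem disconn_of_comparabilityDisconnected {S : Set PermPt} (h : ComparabilityDisconnected S) :
    Disconn S := by
  obtain ⟨A, hA, hSA, hSA'⟩ := h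
  refine ⟨S ∩ A, S \ A, Set.inter_union_sdiff S A, hSA, hSA', fun x hx y hy =>
    ⟨fun hxy => hy.2 ((hA x hx.1 y hy.1 hxy).1 hx.2),
      fun hyx => hy.2 ((hA y hy.1 x hx.1 hyx).2 hx.2)⟩⟩

end PermPt

/-- Let `σ, τ` be separable with `|τ| − |σ| ≥ 3`. Suppose `τ` has a contiguous
subword (positions `a, …, a+2m−1`) of contiguous letters (values `v, …,
v+2m−1`) flattening to `π ⊕ π` with `π` indecomposable (or to `π ⊖ π` with `π`
skew indecomposable), and `σ` is obtained from `τ` by removing one of these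
copies of `π` (witnessed by an occurrence `f` of `σ` in `τ` whose image is
exactly the complement of one copy). Then `(σ,τ)` is disconnected. -/
theorem separable_doubled_block_disconnected (a m b : ℕ) (hm : 3 ≤ m)
    (τ : Equiv.Perm (Fin (a + (m + m) + b))) (σ : Equiv.Perm (Fin (a + m + b)))
    (hsepτ : Separable ⟨a + (m + m) + b, τ⟩)
    (hsepσ : Separable ⟨a + m + b, σ⟩)
    (π : Equiv.Perm (Fin m)) (v : ℕ)
    (hblock :
      ((∀ i : Fin (m + m), (τ ⟨a + (i : ℕ), by omega⟩ : ℕ) = v + ((pds π π) i : ℕ)) ∧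
        ¬ Decomp π) ∨
      ((∀ i : Fin (m + m), (τ ⟨a + (i : ℕ), by omega⟩ : ℕ) = v + ((pss π π) i : ℕ)) ∧
        ¬ SkewDecomp π))
    (f : Fin (a + m + b) → Fin (a + (m + m) + b))
    (hf : StrictMono f)
    (hocc : ∀ x y : Fin (a + m + b), σ x ≤ σ y ↔ τ (f x) ≤ τ (f y))
    (hrange : ∀ x : Fin (a + m + b), (f x : ℕ) < a + m ∨ a + (m + m) ≤ (f x : ℕ)) :
    Disconn {ρ : PermPt | plt ⟨a + m + b, σ⟩ ρ ∧ plt ρ ⟨a + (m + m) + b, τ⟩} := by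
  have hm0 : m ≠ 0 := by omega
  have hlen : a + (m + m) ≤ a + (m + m) + b := Nat.le_add_right _ b
  have hσ : (⟨a + m + b, σ⟩ : PermPt) = PermPt.delete ⟨a + (m + m) + b, τ⟩ (a + m) m :=
    eq_of_le_of_grade_le
      ((PermPt.isOccurrence_of_fin hf hocc).le_delete (by grind) (by grind))
      (show a + (m + m) + b - m ≤ a + m + b by omega)
  have hdisc := PermPt.doubledBlockDisconnected_of_separable hsepτ
  apply PermPt.disconn_of_comparabilityDisconnected
  change ComparabilityDisconnected (Set.Ioo (⟨a + m + b, σ⟩ : PermPt) ⟨a + (m + m) + b, τ⟩)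
  rw [hσ]
  obtain ⟨hτ, hπ⟩ | ⟨hτ, hπ⟩ := hblock
  · exact hdisc pdsP (.inl rfl) a ⟨m, π⟩ (PermPt.indecomposable_pdsP_of_not_decomp hm0 hπ) hm
      (PermPt.hasBlock_of_forall_fin hlen hτ)
  · exact hdisc pssP (.inr rfl) a ⟨m, π⟩ (PermPt.indecomposable_pssP_of_not_skewDecomp hm0 hπ) hm
      (PermPt.hasBlock_of_forall_fin hlen hτ)
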